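/- arXiv:0909.4732 — 3 statements merged into one kernel-verified Lean document; each statement's English description precedes it below -/
import Mathlib

section
/- Let n ≥ 1 and let a = (a_1,…,a_m) be a one-row descending plane partition of order n with no special part, with corresponding permutation π = βγ of {1,…,n}, where β has length n−m. Then: β_1 = n if and only if a_1 < n; for every p with 0 < p < m, β_1 = n−p if and only if a_i = n for all i ≤ p and a_{p+1} < n; and β_1 = n−m if and only if a_1 = a_2 = … = a_m = n. -/
/-- A one-row descending plane partition of order `n` with no special part:
a weakly decreasing list of integers in `{1,…,n}` whose first entry exceeds its length
and whose `k`-th entry (1-indexed) is at least `k`. -/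
def OneRowDPP (n : ℕ) (a : List ℕ) : Prop :=
  a.Chain' (· ≥ ·) ∧ (∀ x ∈ a, 1 ≤ x ∧ x ≤ n) ∧ a.length < a.getD 0 0 ∧
  ∀ p < a.length, p < a.getD p 0

/-!
Let `c` be the number of entries of `a` equal to `n`. As `a` is weakly decreasing and bounded by
`n`, these are its first `c` entries, and they contribute `n, n - 1, …, n - c + 1` to `γ`. A later
entry is smaller than `n` and is lowered by at least `c`, so it contributes a value below `n - c`.
Hence `n - c` is the largest element of `{1,…,n}` missing from `γ`, that is, `β_1 = n - c`; each
equivalence compares `c` with the number in question.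
-/

/-- The word `γ` of a plane partition row `a`. Positions are counted from `0`, so that the entry
`a_k` with `k = i + 1` is lowered by `i`. -/
def gammaWord (a : List ℕ) : List ℕ :=
  a.mapIdx fun i x => x - i

/-- The word `β` that completes `γ` to a permutation of `{1,…,n}`: the elements of `{1,…,n}` that
are missing from `γ`, in decreasing order. -/
def betaWord (n : ℕ) (γ : List ℕ) : List ℕ :=
  (((Finset.Icc 1 n).filter fun x => x ∉ γ).sort (· ≤ ·)).reverse

section DecreasingList

variable {α : Type*} [PartialOrder α] [DecidableEq α] {l : List α} {m d : α}

theorem getD_eq_iff_lt_count (hl : l.Pairwise (· ≥ ·)) (hle : ∀ x ∈ l, x ≤ m) (hd : d ≠ m)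
    (i : ℕ) : l.getD i d = m ↔ i < l.count m := by
  induction l generalizing i with
  | nil => simpa using hd
  | cons b t ih =>
    obtain ⟨hb, ht⟩ := List.pairwise_cons.1 hl
    obtain ⟨hbm, htm⟩ := List.forall_mem_cons.1 hle
    have ih := ih ht htm
    rcases eq_or_ne b m with rfl | hne
    · cases i <;> simp only [List.getD_cons_zero, List.getD_cons_succ, List.count_cons_self,
        Nat.zero_lt_succ, Nat.add_lt_add_iff_right, ih]
    · have hcount : t.count m = 0 :=
        List.count_eq_zero.2 fun hm => hne (le_antisymm hbm (hb m hm))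
      cases i <;> simp only [List.getD_cons_zero, List.getD_cons_succ, List.count_cons_of_ne hne,
        hcount, hne, Nat.not_lt_zero, ih]

theorem getD_lt_iff_count_le (hl : l.Pairwise (· ≥ ·)) (hle : ∀ x ∈ l, x ≤ m) (hd : d < m)
    (i : ℕ) : l.getD i d < m ↔ l.count m ≤ i := by
  have hbound : l.getD i d ≤ m := by
    rcases lt_or_ge i l.length with hi | hi
    · simpa only [List.getD_eq_getElem l d hi] using hle _ (List.getElem_mem hi)
    · simpa only [List.getD_eq_default l d hi] using hd.le
  rw [hbound.lt_iff_ne, ne_eq, getD_eq_iff_lt_count hl hle hd.ne, not_lt]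

end DecreasingList

theorem getD_zero_reverse_sort_of_isGreatest {α : Type*} [LinearOrder α] {s : Finset α} {m : α}
    (hm : IsGreatest (s : Set α) m) (d : α) : (s.sort (· ≤ ·)).reverse.getD 0 d = m := by
  have hlen : 0 < (s.sort (· ≤ ·)).length := by
    simpa using Finset.card_pos.2 ⟨m, hm.1⟩
  rw [List.getD_reverse 0 hlen, List.getD_eq_getElem _ _ (by omega)]
  simp only [Nat.sub_zero, Finset.sorted_last_eq_max']
  exact (s.isGreatest_max' _).unique hm

theorem length_betaWord {n : ℕ} {γ : List ℕ} (hnodup : γ.Nodup) (hγ : ∀ x ∈ γ, x ∈ Finset.Icc 1 n) :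
    (betaWord n γ).length = n - γ.length := by
  have hcompl : (Finset.Icc 1 n).filter (fun x => x ∉ γ) = Finset.Icc 1 n \ γ.toFinset := by
    ext x
    simp
  have hsub : γ.toFinset ⊆ Finset.Icc 1 n := fun x hx => hγ x (List.mem_toFinset.1 hx)
  rw [betaWord, List.length_reverse, Finset.length_sort, hcompl, Finset.card_sdiff_of_subset hsub,
    List.toFinset_card_of_nodup hnodup, Nat.card_Icc, Nat.add_sub_cancel]

section GammaWord

variable {n : ℕ} {a : List ℕ}

theorem mem_gammaWord {x : ℕ} :
    x ∈ gammaWord a ↔ ∃ i, ∃ hi : i < a.length, a[i] - i = x :=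
  List.mem_mapIdx

theorem length_gammaWord : (gammaWord a).length = a.length :=
  List.length_mapIdx

theorem pairwise_gt_gammaWord (ha : a.Pairwise (· ≥ ·))
    (hpos : ∀ (i : ℕ) (hi : i < a.length), i < a[i]) : (gammaWord a).Pairwise (· > ·) := by
  refine List.pairwise_iff_getElem.2 fun i j hi hj hij => ?_
  rw [length_gammaWord] at hi hj
  have hanti : a[j] ≤ a[i] := List.pairwise_iff_getElem.1 ha i j hi hj hij
  have hj_lt : j < a[j] := hpos j hj
  simp only [gammaWord, List.getElem_mapIdx]
  omega

theorem mem_Icc_of_mem_gammaWord (hle : ∀ x ∈ a, x ≤ n)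
    (hpos : ∀ (i : ℕ) (hi : i < a.length), i < a[i]) {x : ℕ} (hx : x ∈ gammaWord a) :
    x ∈ Finset.Icc 1 n := by
  obtain ⟨i, hi, rfl⟩ := mem_gammaWord.1 hx
  have hi_lt : i < a[i] := hpos i hi
  have hi_le : a[i] ≤ n := hle _ (List.getElem_mem hi)
  exact Finset.mem_Icc.2 ⟨by omega, by omega⟩

theorem isGreatest_compl_gammaWord (ha : a.Pairwise (· ≥ ·)) (hle : ∀ x ∈ a, x ≤ n)
    (hpos : ∀ (i : ℕ) (hi : i < a.length), i < a[i]) (hlen : a.length < n) :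
    IsGreatest ((Finset.Icc 1 n).filter fun x => x ∉ gammaWord a : Set ℕ) (n - a.count n) := by
  have hcount_le : a.count n ≤ a.length := List.count_le_length
  have htop : ∀ (i : ℕ) (hi : i < a.length), a[i] = n ↔ i < a.count n := fun i hi => by
    rw [← getD_eq_iff_lt_count ha hle (d := 0) (by omega), List.getD_eq_getElem a 0 hi]
  have hmissing : n - a.count n ∉ gammaWord a := fun hmem => by
    obtain ⟨i, hi, heq⟩ := mem_gammaWord.1 hmem
    have hi_lt : i < a[i] := hpos i hi
    have hi_le : a[i] ≤ n := hle _ (List.getElem_mem hi)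
    have hi_top := htop i hi
    omega
  have hpresent : ∀ i < a.count n, n - i ∈ gammaWord a := fun i hi =>
    have hi_len : i < a.length := hi.trans_le hcount_le
    mem_gammaWord.2 ⟨i, hi_len, by rw [(htop i hi_len).2 hi]⟩
  simp only [Finset.coe_filter, Finset.mem_Icc]
  refine ⟨⟨by omega, hmissing⟩, fun x ⟨hx, hx_missing⟩ => ?_⟩
  by_contra hgt
  refine hx_missing ?_
  rw [← Nat.sub_sub_self hx.2]
  exact hpresent (n - x) (by omega)

theorem getD_zero_betaWord_gammaWord (ha : a.Pairwise (· ≥ ·)) (hle : ∀ x ∈ a, x ≤ n)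
    (hpos : ∀ (i : ℕ) (hi : i < a.length), i < a[i]) (hlen : a.length < n) :
    (betaWord n (gammaWord a)).getD 0 0 = n - a.count n :=
  getD_zero_reverse_sort_of_isGreatest (isGreatest_compl_gammaWord ha hle hpos hlen) 0

end GammaWord

theorem oneRowDPP_head_of_beta_general {n : ℕ} {a : List ℕ} (ha : a.Pairwise (· ≥ ·))
    (hle : ∀ x ∈ a, x ≤ n) (hpos : ∀ (i : ℕ) (hi : i < a.length), i < a[i])
    (hlen : a.length < n) :
    (betaWord n (gammaWord a)).length = n - a.length ∧
    (∀ p, (betaWord n (gammaWord a)).getD 0 0 = n - p ↔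
      (∀ i, 1 ≤ i → i ≤ p → a.getD (i - 1) 0 = n) ∧ a.getD p 0 < n) ∧
    ((betaWord n (gammaWord a)).getD 0 0 = n - a.length ↔ ∀ x ∈ a, x = n) := by
  have hn : 0 < n := by omega
  have hcount_le : a.count n ≤ a.length := List.count_le_length
  rw [getD_zero_betaWord_gammaWord ha hle hpos hlen]
  simp only [getD_eq_iff_lt_count ha hle hn.ne, getD_lt_iff_count_le ha hle hn]
  refine ⟨?_, fun p => ?_, ?_⟩
  · rw [length_betaWord (pairwise_gt_gammaWord ha hpos).nodup
      fun _ => mem_Icc_of_mem_gammaWord hle hpos, length_gammaWord]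
  · have hleading : (∀ i, 1 ≤ i → i ≤ p → i - 1 < a.count n) ↔ p ≤ a.count n := by
      refine ⟨fun h => ?_, fun h i _ _ => by omega⟩
      rcases p.eq_zero_or_pos with rfl | hp
      · exact Nat.zero_le _
      · exact Nat.le_of_pred_lt (h p hp le_rfl)
    rw [hleading]
    omega
  · rw [show n - a.count n = n - a.length ↔ a.count n = a.length by omega, List.count_eq_length]
    simp only [eq_comm]

namespace OneRowDPP

variable {n : ℕ} {a : List ℕ}

theorem pairwise_ge (ha : OneRowDPP n a) : a.Pairwise (· ≥ ·) :=
  List.isChain_iff_pairwise.1 ha.1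

theorem le_of_mem (ha : OneRowDPP n a) : ∀ x ∈ a, x ≤ n :=
  fun x hx => (ha.2.1 x hx).2

theorem lt_getElem (ha : OneRowDPP n a) (i : ℕ) (hi : i < a.length) : i < a[i] := by
  simpa only [List.getD_eq_getElem a 0 hi] using ha.2.2.2 i hi

theorem length_lt (ha : OneRowDPP n a) : a.length < n := by
  obtain ⟨-, hrange, hlen, -⟩ := ha
  cases a with
  | nil => exact absurd hlen (Nat.not_lt_zero _)
  | cons b t => exact hlen.trans_le (hrange b List.mem_cons_self).2

end OneRowDPP

/-- For a one-row DPP `a = (a_1,…,a_m)` of order `n` with no special part and the associated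
permutation `β ++ γ` of `{1,…,n}` (with `γ_k = a_k - (k-1)` and `β` the decreasing listing of
the complement, of length `n - m`): `β_1 = n` iff `a_1 < n`; for `0 < p < m`, `β_1 = n - p`
iff `a_i = n` for all `i ≤ p` and `a_{p+1} < n`; and `β_1 = n - m` iff all entries of `a`
equal `n`. -/
theorem oneRowDPP_head_of_beta (n : ℕ) (hn : 1 ≤ n) (a : List ℕ) (ha : OneRowDPP n a)
    (γ β : List ℕ)
    (hγ : γ = a.mapIdx fun i x => x - i)
    (hβ : β = (((Finset.Icc 1 n).filter fun x => x ∉ γ).sort (· ≤ ·)).reverse) :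
    β.length = n - a.length ∧
    (β.getD 0 0 = n ↔ a.getD 0 0 < n) ∧
    (∀ p, 0 < p → p < a.length →
      (β.getD 0 0 = n - p ↔
        (∀ i, 1 ≤ i → i ≤ p → a.getD (i - 1) 0 = n) ∧ a.getD p 0 < n)) ∧
    (β.getD 0 0 = n - a.length ↔ ∀ x ∈ a, x = n) := by
  subst hγ hβ
  obtain ⟨hlen, hhead, hall⟩ :=
    oneRowDPP_head_of_beta_general ha.pairwise_ge ha.le_of_mem ha.lt_getElem ha.length_lt
  exact ⟨hlen, (hhead 0).trans (and_iff_right (by omega)), fun p _ _ => hhead p, hall⟩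
end

section
/- Let S be a finite set of positive integers of cardinality n ≥ 1. Then the number of one-row descending plane partitions of order n with no special part equals the number of sequences listing each element of S exactly once that have exactly one ascent (i.e., exactly one index k with s_k < s_{k+1}). -/
/-- The number of ascents of a word `l`: positions `k` (0-indexed) with `l_k < l_{k+1}`. -/
def numAscents (l : List ℕ) : ℕ :=
  ((List.range (l.length - 1)).filter fun k => decide (l.getD k 0 < l.getD (k + 1) 0)).length

/-!
Both sides equal the Eulerian number `2 ^ n - (n + 1)`.

A word with exactly one ascent is a decreasing run followed by another one, so it is determined by
the set `T ⊆ S` of letters of its first run. Every subset of `S` arises in this way, except the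
`n + 1` upper sets of `S`, for which the two runs merge into one.

A one-row descending plane partition of length `m` is a weakly decreasing list of length `m` with
entries in `{m, …, n}`, of which there are `n.choose m`, other than the constant list `m, …, m`.
Summing over `m ≤ n`, again `n + 1` of `2 ^ n` objects are excluded.
-/

open Finset

section Ascents

variable {α : Type*}

/-- Position `k` (0-indexed) is an ascent of the word `l`. This is the counterpart of `numAscents`
for words over an arbitrary alphabet, where `List.getD` has no default letter. -/
def IsAscent [LT α] (l : List α) (k : ℕ) : Prop :=
  ∃ h : k + 1 < l.length, l[k] < l[k + 1]

lemma numAscents_eq_one_iff_existsUnique_isAscent {l : List ℕ} :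
    numAscents l = 1 ↔ ∃! k, IsAscent l k := by
  have mem_filter_iff (k : ℕ) :
      k ∈ ({k ∈ range (l.length - 1) | l.getD k 0 < l.getD (k + 1) 0} : Finset ℕ) ↔
        IsAscent l k := by
    grind [IsAscent]
  change #{k ∈ range (l.length - 1) | l.getD k 0 < l.getD (k + 1) 0} = 1 ↔ _
  rw [card_eq_one, singleton_iff_unique_mem]
  simp only [mem_filter_iff]

lemma isAscent_take_iff [LT α] {l : List α} {m k : ℕ} :
    IsAscent (l.take m) k ↔ k + 1 < m ∧ IsAscent l k := by
  grind [IsAscent]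

lemma isAscent_drop_iff [LT α] {l : List α} {m k : ℕ} :
    IsAscent (l.drop m) k ↔ IsAscent l (m + k) := by
  grind [IsAscent]

variable [LinearOrder α]

lemma sortedGE_iff_forall_not_isAscent {l : List α} : l.SortedGE ↔ ∀ k, ¬ IsAscent l k := by
  simp [List.sortedGE_iff_isChain, List.isChain_iff_getElem, IsAscent]

lemma isAscent_append_iff {A B : List α} (hA : A.SortedGE) (hB : B.SortedGE) {k : ℕ} :
    IsAscent (A ++ B) k ↔ k + 1 = A.length ∧ ∃ x ∈ A, ∃ y ∈ B, x < y := by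
  constructor
  · rintro ⟨hk, hlt⟩
    rcases lt_trichotomy (k + 1) A.length with hkA | hkA | hkA
    · have := sortedGE_iff_forall_not_isAscent.1 hA k
      grind [IsAscent]
    · exact ⟨hkA, _, List.getElem_mem (n := k) (by omega), _,
        List.getElem_mem (l := B) (n := 0) (by grind), by grind⟩
    · have := sortedGE_iff_forall_not_isAscent.1 hB (k - A.length)
      grind [IsAscent]
  · rintro ⟨hkA, x, hx, y, hy, hxy⟩
    obtain ⟨i, hi, rfl⟩ := List.getElem_of_mem hx
    obtain ⟨j, hj, rfl⟩ := List.getElem_of_mem hy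
    have last_le : A[k] ≤ A[i] := hA.getElem_ge_getElem_of_le (by omega)
    have le_head : B[j] ≤ B[0] := hB.getElem_ge_getElem_of_le (by omega)
    refine ⟨by grind, ?_⟩
    simpa [List.getElem_append, show k < A.length by omega, hkA] using
      (last_le.trans_lt hxy).trans_le le_head

lemma sortedGE_take_of_forall_isAscent {l : List α} {k : ℕ} (h : ∀ j, IsAscent l j → j = k) :
    (l.take (k + 1)).SortedGE := by
  rw [sortedGE_iff_forall_not_isAscent]
  intro j hj
  have := isAscent_take_iff.1 hj
  grind

lemma sortedGE_drop_of_forall_isAscent {l : List α} {k : ℕ} (h : ∀ j, IsAscent l j → j = k) :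
    (l.drop (k + 1)).SortedGE := by
  rw [sortedGE_iff_forall_not_isAscent]
  intro j hj
  have := h _ (isAscent_drop_iff.1 hj)
  omega

end Ascents

section TwoRunWords

variable {α : Type*} [LinearOrder α] {S T U : Finset α}

/-- The word listing `T` in decreasing order and then `S \ T` in decreasing order, intended for
`T ⊆ S`. Every word with exactly one ascent has this form, see `bijOn_twoRunWord`. -/
def twoRunWord (S T : Finset α) : List α :=
  T.sort (· ≥ ·) ++ (S \ T).sort (· ≥ ·)

/-- The subsets of `S` that are upper sets for the order induced on `S`. They are the `T ⊆ S` for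
which `twoRunWord S T` has no ascent. -/
def upperSubsets (S : Finset α) : Finset (Finset α) :=
  {T ∈ S.powerset | ∀ x ∈ T, ∀ y ∈ S, x ≤ y → y ∈ T}

lemma upperSubsets_eq_insert_image :
    upperSubsets S = insert ∅ (S.image fun x ↦ {y ∈ S | x ≤ y}) := by
  ext T
  simp only [upperSubsets, mem_filter, mem_powerset, mem_insert, mem_image]
  constructor
  · rintro ⟨hTS, hT⟩
    rcases T.eq_empty_or_nonempty with rfl | hne
    · exact .inl rfl
    · refine .inr ⟨T.min' hne, hTS (T.min'_mem hne), ?_⟩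
      ext y
      have := hT _ (T.min'_mem hne) y
      have := T.min'_le y
      grind
  · rintro (rfl | ⟨x, -, rfl⟩) <;> grind

lemma card_upperSubsets : #(upperSubsets S) = #S + 1 := by
  have injOn : Set.InjOn (fun x ↦ {y ∈ S | x ≤ y}) S := by
    intro x hx y hy hxy
    have mem_iff (z : α) : z ∈ S ∧ x ≤ z ↔ z ∈ S ∧ y ≤ z := by
      simpa only [mem_filter] using Finset.ext_iff.1 hxy z
    exact le_antisymm ((mem_iff y).2 ⟨hy, le_rfl⟩).2 ((mem_iff x).1 ⟨hx, le_rfl⟩).2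
  have empty_notMem : ∅ ∉ S.image fun x ↦ {y ∈ S | x ≤ y} := by
    simp only [mem_image, filter_eq_empty_iff, not_exists, not_and]
    exact fun x hx h ↦ h hx le_rfl
  rw [upperSubsets_eq_insert_image, card_insert_of_notMem empty_notMem,
    card_image_of_injOn injOn]

lemma mem_powerset_sdiff_upperSubsets :
    T ∈ S.powerset \ upperSubsets S ↔ T ⊆ S ∧ ∃ x ∈ T, ∃ y ∈ S \ T, x < y := by
  simp only [upperSubsets, mem_sdiff, mem_filter, mem_powerset]
  grind

lemma coe_twoRunWord (hTS : T ⊆ S) : (twoRunWord S T : Multiset α) = S.val := by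
  rw [twoRunWord, ← Multiset.coe_add, sort_eq, sort_eq, sdiff_val,
    add_tsub_cancel_of_le (val_le_iff.2 hTS)]

lemma twoRunWord_toFinset {A B : List α} (hA : A.SortedGE) (hB : B.SortedGE)
    (hAB : ((A ++ B : List α) : Multiset α) = S.val) :
    twoRunWord S A.toFinset = A ++ B := by
  obtain ⟨nodup_A, nodup_B, disjoint_AB⟩ : A.Nodup ∧ B.Nodup ∧ A.Disjoint B := by
    rw [← List.nodup_append', ← Multiset.coe_nodup, hAB]
    exact S.nodup
  have mem_S (x : α) : x ∈ S ↔ x ∈ A ∨ x ∈ B := by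
    rw [← mem_val, ← hAB, Multiset.mem_coe, List.mem_append]
  have sdiff_eq : S \ A.toFinset = B.toFinset := by
    ext x
    have := @disjoint_AB x
    simp only [mem_sdiff, mem_S, List.mem_toFinset]
    tauto
  rw [twoRunWord, sdiff_eq, (List.toFinset_sort _ nodup_A).2 hA.pairwise,
    (List.toFinset_sort _ nodup_B).2 hB.pairwise]

lemma isAscent_twoRunWord_iff {k : ℕ} :
    IsAscent (twoRunWord S T) k ↔ k + 1 = #T ∧ ∃ x ∈ T, ∃ y ∈ S \ T, x < y := by
  simp [twoRunWord, isAscent_append_iff (pairwise_sort _ _).sortedGE (pairwise_sort _ _).sortedGE]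

lemma existsUnique_isAscent_twoRunWord (h : ∃ x ∈ T, ∃ y ∈ S \ T, x < y) :
    ∃! k, IsAscent (twoRunWord S T) k := by
  have card_pos : 0 < #T := card_pos.2 (h.imp fun _ ↦ And.left)
  refine ⟨#T - 1, isAscent_twoRunWord_iff.2 ⟨by omega, h⟩, fun k hk ↦ ?_⟩
  have := (isAscent_twoRunWord_iff.1 hk).1
  omega

lemma eq_of_twoRunWord_eq (hT : ∃ x ∈ T, ∃ y ∈ S \ T, x < y)
    (h : twoRunWord S T = twoRunWord S U) : T = U := by
  obtain ⟨k, hk, -⟩ := existsUnique_isAscent_twoRunWord hT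
  have card_eq : #T = #U :=
    (isAscent_twoRunWord_iff.1 hk).1.symm.trans (isAscent_twoRunWord_iff.1 (h ▸ hk)).1
  have sort_eq : T.sort (· ≥ ·) = U.sort (· ≥ ·) :=
    (List.append_inj h (by simpa using card_eq)).1
  simpa using congrArg List.toFinset sort_eq

lemma exists_twoRunWord_eq {l : List α} (hl : (l : Multiset α) = S.val)
    (hasc : ∃! k, IsAscent l k) : ∃ T ∈ S.powerset \ upperSubsets S, twoRunWord S T = l := by
  obtain ⟨k, hk, hunique⟩ := hasc
  have word_eq := twoRunWord_toFinset
    (sortedGE_take_of_forall_isAscent hunique) (sortedGE_drop_of_forall_isAscent hunique)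
    (by rwa [List.take_append_drop])
  rw [List.take_append_drop] at word_eq
  have subset : (l.take (k + 1)).toFinset ⊆ S := fun x hx ↦ by
    rw [← mem_val, ← hl]
    exact List.mem_of_mem_take (List.mem_toFinset.1 hx)
  rw [← word_eq] at hk
  exact ⟨_, mem_powerset_sdiff_upperSubsets.2 ⟨subset, (isAscent_twoRunWord_iff.1 hk).2⟩, word_eq⟩

lemma bijOn_twoRunWord :
    Set.BijOn (twoRunWord S) ↑(S.powerset \ upperSubsets S)
      {l : List α | (l : Multiset α) = S.val ∧ ∃! k, IsAscent l k} := by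
  refine ⟨fun T hT ↦ ?_, fun T hT U _ h ↦ ?_, fun l hl ↦ exists_twoRunWord_eq hl.1 hl.2⟩
  · obtain ⟨hTS, hT⟩ := mem_powerset_sdiff_upperSubsets.1 hT
    exact ⟨coe_twoRunWord hTS, existsUnique_isAscent_twoRunWord hT⟩
  · exact eq_of_twoRunWord_eq (mem_powerset_sdiff_upperSubsets.1 hT).2 h

theorem ncard_existsUnique_isAscent_add (S : Finset α) :
    {l : List α | (l : Multiset α) = S.val ∧ ∃! k, IsAscent l k}.ncard + (#S + 1) = 2 ^ #S := by
  rw [← bijOn_twoRunWord.image_eq, bijOn_twoRunWord.injOn.ncard_image,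
    Set.ncard_coe_finset, ← card_upperSubsets, ← card_powerset]
  exact card_sdiff_add_card_eq_card (filter_subset _ _)

end TwoRunWords

section SortedLists

variable {α : Type*}

lemma card_sym_eq_multichoose [DecidableEq α] (s : Finset α) (m : ℕ) :
    #(s.sym m) = (#s).multichoose m := by
  have map_univ : (univ : Finset s).map (Function.Embedding.subtype _) = s := by
    rw [univ_eq_attach, attach_map_val]
  rw [← map_univ, sym_map, card_map, sym_univ, card_map, card_univ, card_univ,
    Sym.card_sym_eq_multichoose]

variable [LinearOrder α]

/-- The weakly decreasing lists of length `m` with entries in `s`, encoded by their underlying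
multisets. -/
def sortedLists (s : Finset α) (m : ℕ) : Finset (List α) :=
  (s.sym m).image fun M : Sym α m ↦ (M : Multiset α).sort (· ≥ ·)

lemma mem_sortedLists {s : Finset α} {m : ℕ} {a : List α} :
    a ∈ sortedLists s m ↔ a.SortedGE ∧ a.length = m ∧ ∀ x ∈ a, x ∈ s := by
  simp only [sortedLists, mem_image, mem_sym_iff]
  constructor
  · rintro ⟨M, hM, rfl⟩
    exact ⟨(Multiset.pairwise_sort _ _).sortedGE, by simp,
      fun x hx ↦ hM x ((Multiset.mem_sort _).1 hx)⟩
  · rintro ⟨hsorted, hlength, hmem⟩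
    refine ⟨⟨a, hlength⟩, hmem, ?_⟩
    exact List.Perm.eq_of_sortedGE (Multiset.pairwise_sort _ _).sortedGE hsorted
      (Multiset.coe_eq_coe.1 (Multiset.sort_eq _ _))

lemma card_sortedLists (s : Finset α) (m : ℕ) : #(sortedLists s m) = (#s).multichoose m := by
  have sort_injective :
      Function.Injective fun M : Sym α m ↦ (M : Multiset α).sort (· ≥ ·) := fun M N h ↦
    Sym.coe_injective (by simpa using congrArg ((↑) : List α → Multiset α) h)
  rw [sortedLists, card_image_of_injective _ sort_injective, card_sym_eq_multichoose]

end SortedLists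

section DescendingPlanePartitions

lemma forall_lt_getD_iff_forall_length_le {a : List ℕ} (ha : a.SortedGE) :
    (∀ p < a.length, p < a.getD p 0) ↔ ∀ x ∈ a, a.length ≤ x := by
  constructor
  · intro h x hx
    obtain ⟨i, hi, rfl⟩ := List.getElem_of_mem hx
    have last_le : a[a.length - 1] ≤ a[i] := ha.getElem_ge_getElem_of_le (by omega)
    have := h (a.length - 1) (by omega)
    grind
  · intro h p hp
    rw [List.getD_eq_getElem _ _ hp]
    exact hp.trans_le (h _ (List.getElem_mem hp))

lemma lt_getD_zero_iff_ne_replicate {a : List ℕ} (ha : a.SortedGE) {m : ℕ}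
    (hm : ∀ x ∈ a, m ≤ x) : m < a.getD 0 0 ↔ a ≠ List.replicate a.length m := by
  cases a with
  | nil => simp
  | cons x a =>
    have le_head : ∀ y ∈ a, y ≤ x := (List.pairwise_cons.1 ha.pairwise).1
    have eq_replicate_iff : x :: a = List.replicate (x :: a).length m ↔ x ≤ m := by
      simp only [List.eq_replicate_iff, true_and, List.forall_mem_cons] at hm ⊢
      grind
    rw [ne_eq, eq_replicate_iff, not_le, List.getD_cons_zero]

/-- The one-row descending plane partitions of order `n` and length `m`, see `oneRowDPP_iff_mem`. As
`a` is weakly decreasing, `a_k ≥ k` for all `k` means that the last entry, hence every entry, is at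
least `m`, and then `a_1 > m` only rules out the constant list `m, …, m`. -/
def oneRowDPPsOfLength (n m : ℕ) : Finset (List ℕ) :=
  (sortedLists (Icc m n) m).erase (List.replicate m m)

lemma length_eq_of_mem_oneRowDPPsOfLength {n m : ℕ} {a : List ℕ}
    (ha : a ∈ oneRowDPPsOfLength n m) : a.length = m :=
  (mem_sortedLists.1 (mem_of_mem_erase ha)).2.1

lemma oneRowDPP_iff_mem {n : ℕ} {a : List ℕ} :
    OneRowDPP n a ↔ a ∈ oneRowDPPsOfLength n a.length := by
  rw [OneRowDPP, oneRowDPPsOfLength, List.Chain', ← List.sortedGE_iff_isChain, mem_erase,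
    mem_sortedLists]
  simp only [mem_Icc, true_and]
  constructor
  · rintro ⟨hsorted, hbound, hfirst, hentries⟩
    have hle := (forall_lt_getD_iff_forall_length_le hsorted).1 hentries
    exact ⟨(lt_getD_zero_iff_ne_replicate hsorted hle).1 hfirst, hsorted,
      fun x hx ↦ ⟨hle x hx, (hbound x hx).2⟩⟩
  · rintro ⟨hne, hsorted, hmem⟩
    have hle : ∀ x ∈ a, a.length ≤ x := fun x hx ↦ (hmem x hx).1
    refine ⟨hsorted, fun x hx ↦ ⟨?_, (hmem x hx).2⟩,
      (lt_getD_zero_iff_ne_replicate hsorted hle).2 hne,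
      (forall_lt_getD_iff_forall_length_le hsorted).2 hle⟩
    exact (List.length_pos_of_mem hx).trans_le (hle x hx)

lemma setOf_oneRowDPP_eq_biUnion (n : ℕ) :
    {a : List ℕ | OneRowDPP n a} = ↑((range (n + 1)).biUnion (oneRowDPPsOfLength n)) := by
  ext a
  simp only [Set.mem_ofPred_eq, mem_coe, mem_biUnion, mem_range, oneRowDPP_iff_mem]
  constructor
  · intro ha
    refine ⟨a.length, ?_, ha⟩
    obtain ⟨-, -, hmem⟩ := mem_sortedLists.1 (mem_of_mem_erase ha)
    cases a with
    | nil => simp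
    | cons x a =>
      have := mem_Icc.1 (hmem x List.mem_cons_self)
      omega
  · rintro ⟨m, -, ha⟩
    rwa [length_eq_of_mem_oneRowDPPsOfLength ha]

lemma card_oneRowDPPsOfLength_add_one {m n : ℕ} (hmn : m ≤ n) :
    #(oneRowDPPsOfLength n m) + 1 = n.choose m := by
  have replicate_mem : List.replicate m m ∈ sortedLists (Icc m n) m :=
    mem_sortedLists.2 ⟨List.Pairwise.sortedGE (List.pairwise_replicate.2 (.inr (le_refl m))),
      by simp, by simp [hmn]⟩
  rw [oneRowDPPsOfLength, card_erase_add_one replicate_mem, card_sortedLists,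
    Nat.multichoose_eq, Nat.card_Icc]
  congr 1
  omega

theorem ncard_oneRowDPP_add (n : ℕ) : {a : List ℕ | OneRowDPP n a}.ncard + (n + 1) = 2 ^ n := by
  have pairwiseDisjoint : ((range (n + 1) : Finset ℕ) : Set ℕ).PairwiseDisjoint
      (oneRowDPPsOfLength n) := fun i _ j _ hij ↦ disjoint_left.2 fun a hi hj ↦
    hij ((length_eq_of_mem_oneRowDPPsOfLength hi).symm.trans
      (length_eq_of_mem_oneRowDPPsOfLength hj))
  calc {a : List ℕ | OneRowDPP n a}.ncard + (n + 1)
      = ∑ m ∈ range (n + 1), (#(oneRowDPPsOfLength n m) + 1) := by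
        rw [setOf_oneRowDPP_eq_biUnion, Set.ncard_coe_finset, card_biUnion pairwiseDisjoint,
          sum_add_distrib, sum_const, card_range, smul_eq_mul, mul_one]
    _ = ∑ m ∈ range (n + 1), n.choose m := sum_congr rfl fun m hm ↦
        card_oneRowDPPsOfLength_add_one (mem_range_succ_iff.1 hm)
    _ = 2 ^ n := Nat.sum_range_choose n

end DescendingPlanePartitions

theorem oneRowDPP_card_eq_seq_oneAscent_card_general {α : Type*} [LinearOrder α] (S : Finset α) :
    {a : List ℕ | OneRowDPP #S a}.ncard =
      {l : List α | (l : Multiset α) = S.val ∧ ∃! k, IsAscent l k}.ncard :=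
  Nat.add_right_cancel ((ncard_oneRowDPP_add #S).trans (ncard_existsUnique_isAscent_add S).symm)

/-- For a finite set `S` of positive integers of cardinality `n ≥ 1`, the number of one-row
descending plane partitions of order `n` with no special part equals the number of sequences
listing each element of `S` exactly once that have exactly one ascent. -/
theorem oneRowDPP_card_eq_seq_oneAscent_card (S : Finset ℕ) (hS : ∀ x ∈ S, 0 < x)
    (n : ℕ) (hn : 1 ≤ n) (hcard : S.card = n) :
    {a : List ℕ | OneRowDPP n a}.ncard =
      {l : List ℕ | (l : Multiset ℕ) = S.val ∧ numAscents l = 1}.ncard := by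
  subst hcard
  simpa only [numAscents_eq_one_iff_existsUnique_isAscent] using
    oneRowDPP_card_eq_seq_oneAscent_card_general S
end

section
/- For every n ≥ 1, there exists a bijection Φ from the set of descending plane partitions of order n with no special part onto the set of permutations of {1,…,n} such that, for every such DPP a with k rows of lengths m_1,…,m_k, the permutation Φ(a) has exactly k ascents and its non-inversion number satisfies I(Φ(a)) = Σ_{i=1}^k Σ_{j=i}^{m_i+i−1} a_{i,j} − Σ_{i=1}^k m_i². -/
/-- A descending plane partition, encoded as a list of rows (top row first).
Row `i` (0-indexed) occupies columns `i+1, …, μ_{i+1}` (1-indexed), so the entry at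
position `p` (0-indexed) of row `i` is `a_{i+1, i+1+p}`, and `μ_{i+1} = rowlength + i`. -/
def IsDPP (a : List (List ℕ)) : Prop :=
  -- rows are nonempty arrays of positive integers
  (∀ row ∈ a, row ≠ []) ∧
  (∀ row ∈ a, ∀ x ∈ row, 0 < x) ∧
  -- (1) μ_1 ≥ μ_2 ≥ … ≥ μ_r (where μ_{i+1} = length of row i + i, 0-indexed rows)
  (∀ i, i + 1 < a.length →
    (a.getD (i + 1) []).length + (i + 1) ≤ (a.getD i []).length + i) ∧
  -- (2) rows weakly decreasing
  (∀ row ∈ a, row.Chain' (· ≥ ·)) ∧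
  -- (2') columns strictly decreasing (whenever both entries are defined)
  (∀ i p, i + 1 < a.length → p < (a.getD (i + 1) []).length →
    (a.getD (i + 1) []).getD p 0 < (a.getD i []).getD (p + 1) 0) ∧
  -- (3) each diagonal entry exceeds the number of entries in its row
  (∀ row ∈ a, row.length < row.getD 0 0) ∧
  -- (4) each diagonal entry is at most the number of entries in the row above
  (∀ i, i + 1 < a.length → (a.getD (i + 1) []).getD 0 0 ≤ (a.getD i []).length)

/-- A DPP has order `n` when all its entries are at most `n`. -/
def DPPOrder (a : List (List ℕ)) (n : ℕ) : Prop := ∀ row ∈ a, ∀ x ∈ row, x ≤ n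

/-- No entry `a_{i,j}` is special, i.e. `a_{i,j} > j - i` throughout: the entry at
(0-indexed) position `p` of any row exceeds `p`. -/
def NoSpecialPart (a : List (List ℕ)) : Prop :=
  ∀ row ∈ a, ∀ p < row.length, p < row.getD p 0

/-- The non-inversion number of a word `l`: the number of pairs `i < j` with `l_i < l_j`. -/
def noninv (l : List ℕ) : ℕ :=
  ((Finset.range l.length ×ˢ Finset.range l.length).filter
    fun p => p.1 < p.2 ∧ l.getD p.1 0 < l.getD p.2 0).card

/-!
Replace each letter of a permutation by the number of larger letters to its right. The resulting
code `c` is an arbitrary word whose entries are at most the number of entries to their right; its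
sum is the non-inversion number, and its strict descents are the ascents of the permutation.

Read `c` from right to left and let its `n`-th entry `x` (starting from `n = 0`) extend a DPP of
order `n` without special part by `x` entries `n + 1`. If the first row has at least `x` entries
`n`, then `x` of these are raised to `n + 1`. Otherwise a new first row of `n` entries `n` is put on
top, `x` of which are raised to `n + 1`. The number of entries `n + 1` of the result is `x`, so that
each step can be undone, and a new row is created precisely when `x` exceeds the previous entry of
the code, that is, at an ascent. A step adds `x` to the sum of the parts, besides the `n ^ 2` from a
new row of length `n`.

Without special parts every entry of a row is at least the length `m` of that row, and the rows
below form a DPP of order `m`; the column condition on the row below then only says that it has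
fewer entries `m` than the row above has entries larger than `m`.
-/

namespace DPP

open Set

section LehmerCode

variable {α : Type*} [LinearOrder α]

theorem countP_lt_anti (l : List α) {x y : α} (h : x ≤ y) :
    l.countP (y < ·) ≤ l.countP (x < ·) :=
  List.countP_mono_left fun z _ hz => by
    simp only [decide_eq_true_eq] at hz ⊢
    exact h.trans_lt hz

theorem countP_lt_strictAnti {l : List α} {x y : α} (hy : y ∈ l) (h : x < y) :
    l.countP (y < ·) < l.countP (x < ·) := by
  have hfilter : (l.filter (x < ·)).countP (y < ·) = l.countP (y < ·) := by
    rw [List.countP_filter]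
    refine List.countP_congr fun z _ => ?_
    simpa using fun hz => h.trans hz
  rw [← hfilter, List.countP_eq_length_filter (p := (x < ·)), List.countP_lt_length_iff]
  exact ⟨y, by simp [hy, h], by simp⟩

theorem countP_lt_lt_countP_cons_lt_iff {x y : α} {w : List α} :
    w.countP (y < ·) < (y :: w).countP (x < ·) ↔ x < y := by
  have hself : (y :: w).countP (y < ·) = w.countP (y < ·) := by simp
  rw [← hself]
  refine ⟨fun h => ?_, countP_lt_strictAnti List.mem_cons_self⟩
  contrapose! h
  exact countP_lt_anti _ h

theorem injOn_countP_lt (l : List α) : InjOn (fun x => l.countP (x < ·)) {x | x ∈ l} := by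
  intro x hx y hy hxy
  by_contra hne
  rcases lt_or_gt_of_ne hne with h | h
  · exact (countP_lt_strictAnti hy h).ne' hxy
  · exact (countP_lt_strictAnti hx h).ne hxy

theorem surjOn_countP_lt {l : List α} (hl : l.Nodup) :
    SurjOn (fun x => l.countP (x < ·)) {x | x ∈ l} (Iio l.length) := by
  have hmaps : MapsTo (fun x => l.countP (x < ·)) {x | x ∈ l} (Iio l.length) := fun x hx =>
    List.countP_lt_length_iff.2 ⟨x, hx, by simp⟩
  have := Finset.surjOn_of_injOn_of_card_le (s := l.toFinset) (t := Finset.range l.length)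
    (fun x => l.countP (x < ·)) (by simpa using hmaps) (by simpa using injOn_countP_lt l)
    (by simp [List.toFinset_card_of_nodup hl])
  simpa using this

/-- The variant of the Lehmer code counting non-inversions: each letter is replaced by the number
of larger letters to its right. -/
def lehmerCode : List α → List ℕ
  | [] => []
  | x :: w => w.countP (x < ·) :: lehmerCode w

/-- The range of `lehmerCode`: each entry is at most the number of entries to its right. -/
def IsLehmerCode : List ℕ → Prop
  | [] => True
  | x :: c => x ≤ c.length ∧ IsLehmerCode c

theorem length_lehmerCode (l : List α) : (lehmerCode l).length = l.length := by
  induction l with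
  | nil => rfl
  | cons x w ih => simp [lehmerCode, ih]

theorem isLehmerCode_lehmerCode (l : List α) : IsLehmerCode (lehmerCode l) := by
  induction l with
  | nil => trivial
  | cons x w ih => exact ⟨List.countP_le_length.trans_eq (length_lehmerCode w).symm, ih⟩

theorem countP_lt_eq_of_cons_perm {x : α} {w l : List α} (h : (x :: w).Perm l) :
    w.countP (x < ·) = l.countP (x < ·) := by
  simp [← h.countP_eq]

theorem injOn_lehmerCode (l₀ : List α) : InjOn lehmerCode {l | l.Perm l₀} := by
  intro l (hl : l.Perm l₀) l' (hl' : l'.Perm l₀) h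
  induction l generalizing l' l₀ with
  | nil => exact (List.nil_perm.1 (hl.trans hl'.symm)).symm
  | cons x w ih =>
    cases l' with
    | nil => simp [lehmerCode] at h
    | cons y v =>
      simp only [lehmerCode, List.cons.injEq, countP_lt_eq_of_cons_perm hl,
        countP_lt_eq_of_cons_perm hl'] at h
      obtain rfl : x = y := injOn_countP_lt l₀ (hl.subset List.mem_cons_self)
        (hl'.subset List.mem_cons_self) h.1
      have hwv : w.Perm v := (List.perm_cons x).1 (hl.trans hl'.symm)
      rw [ih w (.refl w) hwv.symm h.2]

theorem surjOn_lehmerCode {l₀ : List α} (hl₀ : l₀.Nodup) :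
    SurjOn lehmerCode {l | l.Perm l₀} {c | IsLehmerCode c ∧ c.length = l₀.length} := by
  rintro c ⟨hc, hlen⟩
  induction c generalizing l₀ with
  | nil => exact ⟨[], by simpa using hlen.symm, rfl⟩
  | cons k c ih =>
    obtain ⟨x, hx : x ∈ l₀, rfl⟩ := surjOn_countP_lt hl₀
      (show k ∈ Iio l₀.length from hlen ▸ Nat.lt_succ_of_le hc.1)
    obtain ⟨w, hw, rfl⟩ := ih (hl₀.erase x) hc.2
      (by rw [List.length_erase_of_mem hx, ← hlen, List.length_cons, Nat.add_sub_cancel])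
    have hperm : (x :: w).Perm l₀ := (hw.cons x).trans (List.perm_cons_erase hx).symm
    exact ⟨x :: w, hperm, by rw [lehmerCode, countP_lt_eq_of_cons_perm hperm]⟩

theorem bijOn_lehmerCode {l₀ : List α} (hl₀ : l₀.Nodup) :
    BijOn lehmerCode {l | l.Perm l₀} {c | IsLehmerCode c ∧ c.length = l₀.length} :=
  ⟨fun l hl => ⟨isLehmerCode_lehmerCode l, (length_lehmerCode l).trans (List.Perm.length_eq hl)⟩,
    injOn_lehmerCode l₀, surjOn_lehmerCode hl₀⟩

end LehmerCode

theorem countP_eq_sum_range_getD (p : ℕ → Prop) [DecidablePred p] (w : List ℕ) :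
    w.countP (p ·) = ∑ j ∈ Finset.range w.length, if p (w.getD j 0) then 1 else 0 := by
  induction w with
  | nil => simp
  | cons a w ih =>
    rw [List.countP_cons, List.length_cons, Finset.sum_range_succ', ih]
    simp

theorem noninv_cons (x : ℕ) (w : List ℕ) :
    noninv (x :: w) = w.countP (x < ·) + noninv w := by
  unfold noninv
  rw [countP_eq_sum_range_getD, Finset.card_filter, Finset.card_filter, Finset.sum_product,
    Finset.sum_product, List.length_cons, Finset.sum_range_succ', add_comm]
  simp only [Finset.sum_range_succ']
  simp

theorem noninv_eq_sum_lehmerCode (l : List ℕ) : noninv l = (lehmerCode l).sum := by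
  induction l with
  | nil => rfl
  | cons x w ih => rw [noninv_cons, ih, lehmerCode, List.sum_cons]

theorem numAscents_cons_cons (x y : ℕ) (w : List ℕ) :
    numAscents (x :: y :: w) = (if x < y then 1 else 0) + numAscents (y :: w) := by
  simp only [numAscents, ← List.countP_eq_length_filter, List.length_cons, Nat.add_sub_cancel,
    List.range_succ_eq_map, List.countP_cons, List.countP_map]
  simp [Function.comp_def, add_comm]

theorem replicate_append_drop {α : Type*} [PartialOrder α] [DecidableEq α] {n : α} {x : ℕ}
    {r : List α} (hr : r.Pairwise (· ≥ ·)) (hle : ∀ y ∈ r, y ≤ n)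
    (hx : x ≤ r.count n) : List.replicate x n ++ r.drop x = r := by
  induction r generalizing x with
  | nil => simp_all
  | cons a r ih =>
    cases x with
    | zero => simp
    | succ x =>
      rw [List.pairwise_cons] at hr
      have han : a = n := by
        have hmem : n ∈ a :: r := List.count_pos_iff.1 (by omega)
        rcases List.mem_cons.1 hmem with h | h
        · exact h.symm
        · exact (hle a List.mem_cons_self).antisymm (hr.1 n h)
      subst han
      rw [List.count_cons_self] at hx
      rw [List.replicate_succ, List.cons_append, List.drop_succ_cons,
        ih hr.2 (fun y hy => hle y (List.mem_cons_of_mem a hy)) (by omega)]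

theorem map_min_eq_self {α : Type*} [LinearOrder α] {n : α} {r : List α}
    (hr : ∀ y ∈ r, y ≤ n) : r.map (min n) = r :=
  (List.map_congr_left fun y hy => min_eq_right (hr y hy)).trans r.map_id

theorem countP_lt_map_min {α : Type*} [LinearOrder α] {m n : α} {r : List α} (hm : m < n) :
    (r.map (min n)).countP (m < ·) = r.countP (m < ·) := by
  rw [List.countP_map]
  exact List.countP_congr fun y _ => by simp [hm]

section Row

/-- Row condition for a DPP of order `n` with no special part: for a weakly decreasing row, having
no special part amounts to every entry being at least the length of the row. -/
structure IsPlainRow (n : ℕ) (r : List ℕ) : Prop where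
  pairwise_ge : r.Pairwise (· ≥ ·)
  length_le : ∀ y ∈ r, r.length ≤ y
  le : ∀ y ∈ r, y ≤ n

/-- Replace the first `x` entries of a row by `n + 1`. -/
def raiseRow (n x : ℕ) (r : List ℕ) : List ℕ :=
  List.replicate x (n + 1) ++ r.drop x

variable {n x : ℕ} {r : List ℕ}

theorem isPlainRow_replicate (n : ℕ) : IsPlainRow n (List.replicate n n) where
  pairwise_ge := by simp [List.pairwise_replicate]
  length_le y hy := by rw [List.length_replicate, List.eq_of_mem_replicate hy]
  le y hy := (List.eq_of_mem_replicate hy).le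

theorem length_raiseRow (hx : x ≤ r.length) : (raiseRow n x r).length = r.length := by
  simp [raiseRow, hx]

theorem length_raiseRow_replicate (hx : x ≤ n) :
    (raiseRow n x (List.replicate n n)).length = n := by
  rw [length_raiseRow (by simpa using hx), List.length_replicate]

theorem IsPlainRow.length_lt (hr : IsPlainRow n r) (h : 0 < r.countP (r.length < ·)) :
    r.length < n := by
  obtain ⟨y, hy, hlt⟩ := List.countP_pos_iff.1 h
  exact (of_decide_eq_true hlt).trans_le (hr.le y hy)

theorem countP_lt_eq_count_succ (hr : ∀ y ∈ r, y ≤ n + 1) :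
    r.countP (n < ·) = r.count (n + 1) :=
  List.countP_congr fun y hy => by
    have := hr y hy
    simp only [decide_eq_true_eq, beq_iff_eq]
    omega

theorem count_succ_le_count_map_min (n : ℕ) (r : List ℕ) :
    r.count (n + 1) ≤ (r.map (min n)).count n := by
  simpa using List.count_le_count_map (f := min n) (x := n + 1) (l := r)

namespace IsPlainRow

theorem map_min_raiseRow (hr : IsPlainRow n r) (hx : x ≤ r.count n) :
    (raiseRow n x r).map (min n) = r := by
  have hdrop : (r.drop x).map (min n) = r.drop x :=
    map_min_eq_self fun y hy => hr.le y (List.mem_of_mem_drop hy)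
  rw [raiseRow, List.map_append, hdrop, List.map_replicate, min_eq_left n.le_succ,
    replicate_append_drop hr.pairwise_ge hr.le hx]

theorem count_raiseRow (hr : IsPlainRow n r) : (raiseRow n x r).count (n + 1) = x := by
  have hdrop : (r.drop x).count (n + 1) = 0 := List.count_eq_zero.2 fun h =>
    (hr.le _ (List.mem_of_mem_drop h)).not_gt n.lt_succ_self
  rw [raiseRow, List.count_append, List.count_replicate_self, hdrop, Nat.add_zero]

theorem sum_raiseRow (hr : IsPlainRow n r) (hx : x ≤ r.count n) :
    (raiseRow n x r).sum = x + r.sum := by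
  have hsum := congrArg List.sum (replicate_append_drop hr.pairwise_ge hr.le hx)
  simp only [raiseRow, List.sum_append, List.sum_replicate, smul_eq_mul] at hsum ⊢
  linarith

theorem raiseRow (hr : IsPlainRow n r) (hx : x ≤ r.count n) :
    IsPlainRow (n + 1) (raiseRow n x r) := by
  have hlen := length_raiseRow (n := n) (hx.trans List.count_le_length)
  refine ⟨?_, fun y hy => ?_, fun y hy => ?_⟩
  · rw [DPP.raiseRow, List.pairwise_append]
    refine ⟨by simp [List.pairwise_replicate], hr.pairwise_ge.sublist (List.drop_sublist x r), ?_⟩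
    intro a ha b hb
    rw [List.eq_of_mem_replicate ha]
    exact (hr.le b (List.mem_of_mem_drop hb)).trans n.le_succ
  · rw [hlen]
    have := hr.length_le (min n y) (hr.map_min_raiseRow hx ▸ List.mem_map_of_mem hy)
    exact this.trans (min_le_right n y)
  · rcases List.mem_append.1 hy with h | h
    · exact (List.eq_of_mem_replicate h).le
    · exact (hr.le y (List.mem_of_mem_drop h)).trans n.le_succ

theorem map_min (hr : IsPlainRow (n + 1) r) (hn : r.length ≤ n) : IsPlainRow n (r.map (min n)) where
  pairwise_ge := hr.pairwise_ge.map _ fun _ _ h => min_le_min_left n h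
  length_le y hy := by
    obtain ⟨z, hz, rfl⟩ := List.mem_map.1 hy
    rw [List.length_map]
    exact le_min hn (hr.length_le z hz)
  le y hy := by
    obtain ⟨z, _, rfl⟩ := List.mem_map.1 hy
    exact min_le_left n z

theorem map_min_eq_replicate (hr : IsPlainRow (n + 1) r) (hn : r.length = n) :
    r.map (min n) = List.replicate n n := by
  refine List.eq_replicate_iff.2 ⟨by rw [List.length_map, hn], fun y hy => ?_⟩
  obtain ⟨z, hz, rfl⟩ := List.mem_map.1 hy
  exact min_eq_left (hn ▸ hr.length_le z hz)

theorem raiseRow_map_min (hr : IsPlainRow (n + 1) r) :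
    DPP.raiseRow n (r.count (n + 1)) (r.map (min n)) = r := by
  set x := r.count (n + 1)
  have hsplit : List.replicate x (n + 1) ++ r.drop x = r :=
    replicate_append_drop hr.pairwise_ge hr.le le_rfl
  have hdrop : ∀ y ∈ r.drop x, y ≤ n := fun y hy => by
    have hcount : (r.drop x).count (n + 1) = 0 := by
      have := congrArg (List.count (n + 1)) hsplit
      rw [List.count_append, List.count_replicate_self] at this
      omega
    refine Nat.le_of_lt_succ (lt_of_le_of_ne (hr.le y (List.mem_of_mem_drop hy)) ?_)
    rintro rfl
    exact List.count_eq_zero.1 hcount hy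
  rw [DPP.raiseRow, ← List.map_drop, map_min_eq_self hdrop, hsplit]

end IsPlainRow

end Row

section Insertion

/-- The multiplicity of `n` in the first row. -/
def topCount (n : ℕ) (a : List (List ℕ)) : ℕ := (a.headD []).count n

/-- Descending plane partitions of order `n` without special parts, described from the top row
down: the length of each row is the order of the array below it. -/
def IsPlainDPP : ℕ → List (List ℕ) → Prop
  | _, [] => True
  | n, r :: a => IsPlainRow n r ∧ topCount r.length a < r.countP (r.length < ·) ∧
      IsPlainDPP r.length a

/-- Turn a DPP of order `n` into one of order `n + 1` with `x` entries `n + 1`. The first row can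
absorb them if it has at least `x` entries `n`; otherwise a new first row is created. -/
def insertTop (n x : ℕ) (a : List (List ℕ)) : List (List ℕ) :=
  if topCount n a < x then raiseRow n x (List.replicate n n) :: a else a.modifyHead (raiseRow n x)

/-- The inverse of `insertTop`: lower the entries `n + 1` to `n`, and drop the first row if this
makes it consist of `n` entries `n`. -/
def removeTop (n : ℕ) : List (List ℕ) → List (List ℕ)
  | [] => []
  | r :: a => if r.length = n then a else r.map (min n) :: a

variable {n x : ℕ} {r : List ℕ} {a : List (List ℕ)}

theorem IsPlainDPP.length_head_lt (h : IsPlainDPP n (r :: a)) : r.length < n :=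
  h.1.length_lt (Nat.zero_lt_of_lt h.2.1)

theorem insertTop_of_lt (hx : topCount n a < x) :
    insertTop n x a = raiseRow n x (List.replicate n n) :: a :=
  if_pos hx

theorem insertTop_of_le (hx : x ≤ topCount n a) :
    insertTop n x a = a.modifyHead (raiseRow n x) :=
  if_neg hx.not_gt

theorem isPlainDPP_insertTop (h : IsPlainDPP n a) (hx : x ≤ n) :
    IsPlainDPP (n + 1) (insertTop n x a) := by
  rcases lt_or_ge (topCount n a) x with hnew | hold
  · have hrow := (isPlainRow_replicate n).raiseRow (x := x) (by simpa using hx)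
    rw [insertTop_of_lt hnew, IsPlainDPP, length_raiseRow_replicate hx,
      countP_lt_eq_count_succ hrow.le, (isPlainRow_replicate n).count_raiseRow]
    exact ⟨hrow, hnew, h⟩
  · rw [insertTop_of_le hold]
    cases a with
    | nil => trivial
    | cons r a =>
      have hcount : x ≤ r.count n := hold
      rw [List.modifyHead_cons, IsPlainDPP, length_raiseRow (hcount.trans List.count_le_length),
        ← countP_lt_map_min h.length_head_lt, h.1.map_min_raiseRow hcount]
      exact ⟨h.1.raiseRow hcount, h.2⟩

theorem isPlainDPP_removeTop (h : IsPlainDPP (n + 1) a) : IsPlainDPP n (removeTop n a) := by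
  cases a with
  | nil => trivial
  | cons r a =>
    by_cases hr : r.length = n
    · rw [removeTop, if_pos hr, ← hr]
      exact h.2.2
    · have hlt : r.length < n := lt_of_le_of_ne (Nat.le_of_lt_succ h.length_head_lt) hr
      rw [removeTop, if_neg hr, IsPlainDPP, List.length_map, countP_lt_map_min hlt]
      exact ⟨h.1.map_min hlt.le, h.2⟩

theorem topCount_succ_le (h : IsPlainDPP (n + 1) a) : topCount (n + 1) a ≤ n := by
  cases a with
  | nil => simp [topCount]
  | cons r a => exact List.count_le_length.trans (Nat.le_of_lt_succ h.length_head_lt)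

theorem topCount_insertTop (h : IsPlainDPP n a) : topCount (n + 1) (insertTop n x a) = x := by
  rcases lt_or_ge (topCount n a) x with hnew | hold
  · rw [insertTop_of_lt hnew]
    exact (isPlainRow_replicate n).count_raiseRow
  · rw [insertTop_of_le hold]
    cases a with
    | nil => exact (Nat.le_zero.1 hold).symm
    | cons r a => exact h.1.count_raiseRow

theorem removeTop_insertTop (h : IsPlainDPP n a) (hx : x ≤ n) :
    removeTop n (insertTop n x a) = a := by
  rcases lt_or_ge (topCount n a) x with hnew | hold
  · rw [insertTop_of_lt hnew, removeTop, if_pos (length_raiseRow_replicate hx)]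
  · rw [insertTop_of_le hold]
    cases a with
    | nil => rfl
    | cons r a =>
      have hcount : x ≤ r.count n := hold
      rw [List.modifyHead_cons, removeTop, length_raiseRow (hcount.trans List.count_le_length),
        if_neg h.length_head_lt.ne, h.1.map_min_raiseRow hcount]

theorem insertTop_topCount_removeTop (h : IsPlainDPP (n + 1) a) :
    insertTop n (topCount (n + 1) a) (removeTop n a) = a := by
  cases a with
  | nil => rfl
  | cons r a =>
    change insertTop n (r.count (n + 1)) (removeTop n (r :: a)) = r :: a
    by_cases hr : r.length = n
    · have hnew : topCount n a < r.count (n + 1) := by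
        simpa only [hr, countP_lt_eq_count_succ h.1.le] using h.2.1
      rw [removeTop, if_pos hr, insertTop_of_lt hnew, ← h.1.map_min_eq_replicate hr,
        h.1.raiseRow_map_min]
    · rw [removeTop, if_neg hr, insertTop_of_le (count_succ_le_count_map_min n r),
        List.modifyHead_cons, h.1.raiseRow_map_min]

theorem bijOn_insertTop (n : ℕ) :
    BijOn (fun p : ℕ × List (List ℕ) => insertTop n p.1 p.2) (Iic n ×ˢ {a | IsPlainDPP n a})
      {a | IsPlainDPP (n + 1) a} := by
  refine InvOn.bijOn (f' := fun a => (topCount (n + 1) a, removeTop n a)) ⟨?_, ?_⟩ ?_ ?_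
  · rintro ⟨x, a⟩ ⟨hx, ha⟩
    exact Prod.ext (topCount_insertTop ha) (removeTop_insertTop ha hx)
  · exact fun a ha => insertTop_topCount_removeTop ha
  · rintro ⟨x, a⟩ ⟨hx, ha⟩
    exact isPlainDPP_insertTop ha hx
  · exact fun a ha => ⟨topCount_succ_le ha, isPlainDPP_removeTop ha⟩

theorem length_insertTop (n x : ℕ) (a : List (List ℕ)) :
    (insertTop n x a).length = (if topCount n a < x then 1 else 0) + a.length := by
  unfold insertTop
  split_ifs <;> simp [add_comm]

theorem sum_insertTop (h : IsPlainDPP n a) (hx : x ≤ n) :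
    ((insertTop n x a).map List.sum).sum + (a.map fun row => row.length ^ 2).sum =
      x + (a.map List.sum).sum + ((insertTop n x a).map fun row => row.length ^ 2).sum := by
  rcases lt_or_ge (topCount n a) x with hnew | hold
  · simp only [insertTop_of_lt hnew, List.map_cons, List.sum_cons, length_raiseRow_replicate hx,
      (isPlainRow_replicate n).sum_raiseRow (x := x) (by simpa using hx), List.sum_replicate,
      smul_eq_mul]
    ring
  · rw [insertTop_of_le hold]
    cases a with
    | nil =>
      obtain rfl : x = 0 := Nat.le_zero.1 hold
      rfl
    | cons r a =>
      have hcount : x ≤ r.count n := hold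
      simp only [List.modifyHead_cons, List.map_cons, List.sum_cons,
        length_raiseRow (hcount.trans List.count_le_length), h.1.sum_raiseRow hcount]
      ring

/-- The DPP built from a Lehmer code by inserting its entries from right to left. -/
def ofCode : List ℕ → List (List ℕ)
  | [] => []
  | x :: c => insertTop c.length x (ofCode c)

theorem isPlainDPP_zero_iff : IsPlainDPP 0 a ↔ a = [] := by
  cases a with
  | nil => simp [IsPlainDPP]
  | cons r a => simpa using fun h => Nat.not_lt_zero _ (IsPlainDPP.length_head_lt h)

theorem bijOn_cons_isLehmerCode (n : ℕ) :
    BijOn (fun p : ℕ × List ℕ => p.1 :: p.2) (Iic n ×ˢ {c | IsLehmerCode c ∧ c.length = n})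
      {c | IsLehmerCode c ∧ c.length = n + 1} := by
  refine ⟨?_, ?_, ?_⟩
  · rintro ⟨x, c⟩ ⟨hx, hc, rfl⟩
    exact ⟨⟨hx, hc⟩, rfl⟩
  · rintro ⟨x, c⟩ - ⟨y, d⟩ - h
    simpa using h
  · rintro (_ | ⟨x, c⟩) ⟨hc, hlen⟩
    · simp at hlen
    · obtain rfl : c.length = n := by simpa using hlen
      exact ⟨(x, c), ⟨hc.1, hc.2, rfl⟩, rfl⟩

theorem bijOn_ofCode (n : ℕ) :
    BijOn ofCode {c | IsLehmerCode c ∧ c.length = n} {a | IsPlainDPP n a} := by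
  induction n with
  | zero =>
    have hcode : {c | IsLehmerCode c ∧ c.length = 0} = {[]} := by
      ext c
      simpa using fun h : c = [] => h ▸ trivial
    simp only [hcode, isPlainDPP_zero_iff]
    exact bijOn_singleton.2 rfl
  | succ n ih =>
    have hcons := bijOn_cons_isLehmerCode n
    have hinsert := (bijOn_insertTop n).comp ((bijOn_id (Iic n)).prodMap ih)
    rw [← hcons.image_eq, ← bijOn_comp_iff hcons.injOn]
    refine hinsert.congr ?_
    rintro ⟨x, c⟩ ⟨-, -, rfl⟩
    rfl

theorem isPlainDPP_ofCode {c : List ℕ} (hc : IsLehmerCode c) : IsPlainDPP c.length (ofCode c) :=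
  (bijOn_ofCode c.length).mapsTo ⟨hc, rfl⟩

theorem sum_ofCode {c : List ℕ} (hc : IsLehmerCode c) :
    c.sum + ((ofCode c).map fun row => row.length ^ 2).sum = ((ofCode c).map List.sum).sum := by
  induction c with
  | nil => rfl
  | cons x c ih =>
    have hinsert := sum_insertTop (isPlainDPP_ofCode hc.2) hc.1
    rw [List.sum_cons, ofCode]
    linarith [ih hc.2]

theorem numAscents_eq_length_ofCode_lehmerCode (l : List ℕ) :
    numAscents l = (ofCode (lehmerCode l)).length := by
  induction l with
  | nil => rfl
  | cons x w ih =>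
    cases w with
    | nil => rfl
    | cons y w =>
      have htop : topCount (y :: w).length (ofCode (lehmerCode (y :: w))) = w.countP (y < ·) := by
        rw [List.length_cons, ← length_lehmerCode w]
        exact topCount_insertTop (isPlainDPP_ofCode (isLehmerCode_lehmerCode w))
      change _ = (insertTop (lehmerCode (y :: w)).length ((y :: w).countP (x < ·))
        (ofCode (lehmerCode (y :: w)))).length
      rw [numAscents_cons_cons, ih, length_insertTop, length_lehmerCode, htop]
      simp only [countP_lt_lt_countP_cons_lt_iff]

end Insertion

section Equivalence

/-- The conditions of `IsDPP` on a single row. -/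
structure IsDPPRow (r : List ℕ) : Prop where
  ne_nil : r ≠ []
  pos : ∀ x ∈ r, 0 < x
  pairwise_ge : r.Pairwise (· ≥ ·)
  length_lt_head : r.length < r.getD 0 0

/-- The conditions of `IsDPP` on a row `r` and the row `s` below it. -/
structure IsDPPStep (r s : List ℕ) : Prop where
  length_lt : s.length < r.length
  getD_lt : ∀ p < s.length, s.getD p 0 < r.getD (p + 1) 0
  head_le : s.getD 0 0 ≤ r.length

variable {m n p : ℕ} {r s : List ℕ} {a : List (List ℕ)}

theorem isDPP_iff : IsDPP a ↔ (∀ r ∈ a, IsDPPRow r) ∧ a.IsChain IsDPPStep := by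
  rw [List.isChain_iff_getElem]
  constructor
  · rintro ⟨hne, hpos, hlen, hge, hcol, hdiag, hhead⟩
    refine ⟨fun r hr => ⟨hne r hr, hpos r hr, List.isChain_iff_pairwise.1 (hge r hr), hdiag r hr⟩,
      fun i hi => ?_⟩
    rw [← List.getD_eq_getElem a [] (by omega), ← List.getD_eq_getElem a [] hi]
    exact ⟨by have := hlen i hi; omega, fun p => hcol i p hi, hhead i hi⟩
  · rintro ⟨hrow, hstep⟩
    have hstep' : ∀ i, i + 1 < a.length → IsDPPStep (a.getD i []) (a.getD (i + 1) []) :=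
      fun i hi => by
        rw [List.getD_eq_getElem a [] (by omega), List.getD_eq_getElem a [] hi]
        exact hstep i hi
    exact ⟨fun r hr => (hrow r hr).ne_nil, fun r hr => (hrow r hr).pos,
      fun i hi => by have := (hstep' i hi).length_lt; omega,
      fun r hr => List.isChain_iff_pairwise.2 (hrow r hr).pairwise_ge,
      fun i p hi => (hstep' i hi).getD_lt p, fun r hr => (hrow r hr).length_lt_head,
      fun i hi => (hstep' i hi).head_le⟩

theorem isDPP_cons_iff :
    IsDPP (r :: a) ↔ IsDPPRow r ∧ (∀ s ∈ a.head?, IsDPPStep r s) ∧ IsDPP a := by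
  simp only [isDPP_iff, List.forall_mem_cons, List.isChain_cons]
  tauto

theorem getD_le (hr : ∀ y ∈ r, y ≤ n) : r.getD p 0 ≤ n := by
  rcases lt_or_ge p r.length with hp | hp
  · exact List.getD_eq_getElem r 0 hp ▸ hr _ (List.getElem_mem hp)
  · exact (List.getD_eq_default r 0 hp).trans_le n.zero_le

theorem le_getD (hr : ∀ y ∈ r, m ≤ y) (hp : p < r.length) : m ≤ r.getD p 0 :=
  List.getD_eq_getElem r 0 hp ▸ hr _ (List.getElem_mem hp)

theorem le_head {y : ℕ} (hr : r.Pairwise (· ≥ ·)) (hy : y ∈ r) : y ≤ r.getD 0 0 := by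
  cases r with
  | nil => simp at hy
  | cons a r =>
    rcases List.mem_cons.1 hy with rfl | hy
    · exact le_rfl
    · exact List.rel_of_pairwise_cons hr hy

theorem lt_countP_lt_iff (hr : r.Pairwise (· ≥ ·)) :
    p < r.countP (m < ·) ↔ m < r.getD p 0 := by
  induction r generalizing p with
  | nil => simp
  | cons a r ih =>
    rw [List.pairwise_cons] at hr
    by_cases ha : m < a
    · cases p with
      | zero => simp [ha]
      | succ p => simp [ha, ih hr.2]
    · have hle : ∀ y ∈ a :: r, y ≤ m := by
        simpa [not_lt.1 ha] using fun y hy => (hr.1 y hy).trans (not_lt.1 ha)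
      have hzero : (a :: r).countP (m < ·) = 0 := by simpa [List.countP_eq_zero] using hle
      simpa [hzero] using getD_le hle

theorem lt_count_iff (hr : r.Pairwise (· ≥ ·)) (hle : ∀ y ∈ r, y ≤ n) (hn : 0 < n) :
    p < r.count n ↔ r.getD p 0 = n := by
  obtain ⟨m, rfl⟩ := Nat.exists_eq_add_one.2 hn
  have := getD_le (p := p) hle
  rw [← countP_lt_eq_count_succ hle, lt_countP_lt_iff hr]
  omega

theorem forall_length_le_iff (hr : r.Pairwise (· ≥ ·)) :
    (∀ y ∈ r, r.length ≤ y) ↔ ∀ p < r.length, p < r.getD p 0 := by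
  refine ⟨fun h p hp => hp.trans_le (le_getD h hp), fun h y hy => ?_⟩
  obtain ⟨i, hi, rfl⟩ := List.getElem_of_mem hy
  have hlast := h (r.length - 1) (by omega)
  rw [List.getD_eq_getElem r 0 (by omega)] at hlast
  have hle : r[r.length - 1] ≤ r[i] := hr.rel_get_of_le (a := ⟨i, hi⟩)
    (b := ⟨r.length - 1, by omega⟩) (Nat.le_sub_one_of_lt hi)
  omega

theorem isPlainRow_and_countP_pos_iff :
    IsPlainRow n r ∧ 0 < r.countP (r.length < ·) ↔
      IsDPPRow r ∧ (∀ y ∈ r, y ≤ n) ∧ ∀ p < r.length, p < r.getD p 0 := by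
  constructor
  · rintro ⟨hr, hpos⟩
    have hne : r ≠ [] := by
      rintro rfl
      simp at hpos
    exact ⟨⟨hne, fun y hy => (List.length_pos_of_ne_nil hne).trans_le (hr.length_le y hy),
      hr.pairwise_ge, (lt_countP_lt_iff hr.pairwise_ge).1 hpos⟩, hr.le,
      (forall_length_le_iff hr.pairwise_ge).1 hr.length_le⟩
  · rintro ⟨hr, hle, hspecial⟩
    exact ⟨⟨hr.pairwise_ge, (forall_length_le_iff hr.pairwise_ge).2 hspecial, hle⟩,
      (lt_countP_lt_iff hr.pairwise_ge).2 hr.length_lt_head⟩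

theorem isDPPStep_iff (hr : IsPlainRow n r) (hpos : 0 < r.countP (r.length < ·))
    (hs : IsPlainRow r.length s) (hlen : s.length < r.length) :
    IsDPPStep r s ↔ s.count r.length < r.countP (r.length < ·) := by
  have hcount (p : ℕ) : p < s.count r.length ↔ s.getD p 0 = r.length :=
    lt_count_iff hs.pairwise_ge hs.le (Nat.zero_lt_of_lt hlen)
  constructor
  · intro h
    cases hc : s.count r.length with
    | zero => exact hpos
    | succ p =>
      have hp : p < s.count r.length := hc ▸ p.lt_succ_self
      rw [lt_countP_lt_iff hr.pairwise_ge, ← (hcount p).1 hp]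
      exact h.getD_lt p (hp.trans_le List.count_le_length)
  · refine fun h => ⟨hlen, fun p hp => ?_, getD_le hs.le⟩
    rcases (getD_le hs.le : s.getD p 0 ≤ r.length).lt_or_eq with hlt | heq
    · exact hlt.trans_le (le_getD hr.length_le (by omega))
    · rw [heq, ← lt_countP_lt_iff hr.pairwise_ge]
      exact (Nat.succ_le_of_lt ((hcount p).2 heq)).trans_lt h

theorem forall_head_isDPPStep_iff (hr : IsPlainRow n r) (hpos : 0 < r.countP (r.length < ·))
    (ha : IsPlainDPP r.length a) :
    (∀ s ∈ a.head?, IsDPPStep r s) ↔ topCount r.length a < r.countP (r.length < ·) := by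
  cases a with
  | nil => simpa [topCount] using hpos
  | cons s a => simpa [topCount] using isDPPStep_iff hr hpos ha.1 ha.length_head_lt

theorem dppOrder_of_head_le (ha : IsDPP a) (hhead : ∀ s ∈ a.head?, s.getD 0 0 ≤ n) :
    DPPOrder a n := by
  induction a generalizing n with
  | nil => simp [DPPOrder]
  | cons r a ih =>
    obtain ⟨hr, hstep, ha⟩ := isDPP_cons_iff.1 ha
    have hrn : r.getD 0 0 ≤ n := hhead r rfl
    refine List.forall_mem_cons.2
      ⟨fun y hy => (le_head hr.pairwise_ge hy).trans hrn, ih ha fun s hs => ?_⟩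
    exact (hstep s hs).head_le.trans (hr.length_lt_head.le.trans hrn)

theorem isPlainDPP_iff : IsPlainDPP n a ↔ IsDPP a ∧ DPPOrder a n ∧ NoSpecialPart a := by
  induction a generalizing n with
  | nil => simp [IsPlainDPP, isDPP_iff, DPPOrder, NoSpecialPart]
  | cons r a ih =>
    have horder : DPPOrder (r :: a) n ↔ (∀ y ∈ r, y ≤ n) ∧ DPPOrder a n := List.forall_mem_cons
    have hspecial : NoSpecialPart (r :: a) ↔
        (∀ p < r.length, p < r.getD p 0) ∧ NoSpecialPart a := List.forall_mem_cons
    rw [horder, hspecial, isDPP_cons_iff]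
    constructor
    · rintro ⟨hr, htop, ha⟩
      have hpos := Nat.zero_lt_of_lt htop
      obtain ⟨hrow, hle, hr'⟩ := isPlainRow_and_countP_pos_iff.1 ⟨hr, hpos⟩
      obtain ⟨hdpp, hord, hspec⟩ := ih.1 ha
      exact ⟨⟨hrow, (forall_head_isDPPStep_iff hr hpos ha).2 htop, hdpp⟩,
        ⟨hle, fun s hs y hy => (hord s hs y hy).trans (hr.length_lt hpos).le⟩, hr', hspec⟩
    · rintro ⟨⟨hrow, hstep, hdpp⟩, ⟨hle, -⟩, hr', hspec⟩
      obtain ⟨hr, hpos⟩ := isPlainRow_and_countP_pos_iff.2 ⟨hrow, hle, hr'⟩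
      have hord : DPPOrder a r.length :=
        dppOrder_of_head_le hdpp fun s hs => (hstep s hs).head_le
      have ha := ih.2 ⟨hdpp, hord, hspec⟩
      exact ⟨hr, (forall_head_isDPPStep_iff hr hpos ha).1 hstep, ha⟩

end Equivalence

theorem bijOn_ofCode_comp_lehmerCode (n : ℕ) :
    BijOn (ofCode ∘ lehmerCode) {l | l.Perm (List.range' 1 n)}
      {a | IsDPP a ∧ DPPOrder a n ∧ NoSpecialPart a} := by
  have hcode := bijOn_lehmerCode (List.nodup_range' (s := 1) (n := n))
  rw [List.length_range'] at hcode
  simpa only [isPlainDPP_iff] using (bijOn_ofCode n).comp hcode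

end DPP

/-- The main bijection: for every `n ≥ 1` there is a bijection `Φ` from descending plane
partitions of order `n` with no special part onto permutations of `{1,…,n}` such that a DPP
with `k` rows of lengths `m_1,…,m_k` maps to a permutation with exactly `k` ascents whose
non-inversion number satisfies `I(Φ a) = Σ_{i,j} a_{i,j} − Σ_i m_i²` (stated additively). -/
theorem dpp_perm_bijection (n : ℕ) (hn : 1 ≤ n) :
    ∃ Φ : {a : List (List ℕ) // IsDPP a ∧ DPPOrder a n ∧ NoSpecialPart a} ≃
        {l : List ℕ // l.Perm (List.range' 1 n)},
      ∀ a, numAscents (Φ a).1 = a.1.length ∧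
        noninv (Φ a).1 + (a.1.map fun row => row.length ^ 2).sum =
          (a.1.map List.sum).sum := by
  let e := (DPP.bijOn_ofCode_comp_lehmerCode n).equiv
  refine ⟨e.symm, fun a => ?_⟩
  obtain ⟨l, rfl⟩ := e.surjective a
  rw [Equiv.symm_apply_apply]
  exact ⟨DPP.numAscents_eq_length_ofCode_lehmerCode l,
    DPP.noninv_eq_sum_lehmerCode l ▸ DPP.sum_ofCode (DPP.isLehmerCode_lehmerCode l.1)⟩
end
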